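/- Error-free codeword equation for circuits in extended form: let N ≥ 1, Q_I, Q_M ⊆ {1,…,N}, K_I ⊆ Q_I, K_M ⊆ Q_M. Let U ∈ M_{2ᴺ}(ℂ) be unitary, S_in, S_out ∈ P_N, and ν ∈ {1,−1} satisfy U·(S_in·∏_{q∈K_I} Z_q)·U† = ν·S_out·∏_{q∈K_M} Z_q, and suppose S_out Z_q = Z_q S_out for every q ∈ Q_M. Let ρ₀ ∈ M_{2ᴺ}(ℂ) satisfy Z_q ρ₀ = ρ₀ for every q ∈ Q_I. For μ : Q_M → {1,−1} set E_μ = ∏_{q∈Q_M} (I + μ(q) Z_q)/2. Then Tr(S_in ρ₀) = ν · Σ_{μ : Q_M→{1,−1}} (∏_{q∈K_M} μ(q)) · Tr(S_out E_μ U ρ₀ U† E_μ). -/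

import Mathlib

/-!
The measurement averages out to a Pauli observable. Every `Z_q` is diagonal in the computational
basis, hence so are `∏_{q∈K} Z_q` and the projectors `E_μ`, and evaluating on the diagonal gives
the spectral decomposition `∏_{q∈K_M} Z_q = Σ_μ (∏_{q∈K_M} μ(q)) E_μ` (`sum_sgn_Eproj`).

Since `S_out` commutes with the idempotent `E_μ` (`commute_Eproj`, `Eproj_mul_self`), cyclicity of
the trace gives `Tr(S_out E_μ X E_μ) = Tr(S_out E_μ X)` with `X = U ρ₀ U†`. The right-hand side
therefore equals `Tr(ν S_out (∏_{q∈K_M} Z_q) X) = Tr(U S_in (∏_{q∈K_I} Z_q) U† U ρ₀ U†)`.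
Unitarity, cyclicity and `(∏_{q∈K_I} Z_q) ρ₀ = ρ₀` (`ZProd_mul_of_fixed`) reduce this
to `Tr(S_in ρ₀)`.
-/

open Matrix
open scoped Matrix

noncomputable section

/-- The Pauli matrix `X`. -/
def PX : Matrix (Fin 2) (Fin 2) ℂ := !![0, 1; 1, 0]

/-- The Pauli matrix `Z`. -/
def PZ : Matrix (Fin 2) (Fin 2) ℂ := !![1, 0; 0, -1]

/-- The Pauli matrix `Y = i X Z`. -/
def PY : Matrix (Fin 2) (Fin 2) ℂ := Complex.I • (PX * PZ)

/-- The single-qubit matrix `X^x Z^z`, exponents via the lift `𝔽₂ → {0,1} ⊆ ℕ`. -/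
def XZ (x z : ZMod 2) : Matrix (Fin 2) (Fin 2) ℂ := PX ^ x.val * PZ ^ z.val

/-- The `n`-fold Kronecker (tensor) product of 2×2 matrices, realised on the
index type `Fin n → Fin 2` (so that the `(i,j)` entry is the product of the
single-site entries). -/
def tensorFun {n : ℕ} (f : Fin n → Matrix (Fin 2) (Fin 2) ℂ) :
    Matrix (Fin n → Fin 2) (Fin n → Fin 2) ℂ :=
  Matrix.of fun i j => ∏ q, f q (i q) (j q)

/-- Hamming weight of a vector over `𝔽₂`. -/
def hamWt {n : ℕ} (v : Fin n → ZMod 2) : ℕ :=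
  (Finset.univ.filter fun q => v q ≠ 0).card

/-- The map `σ(x,z) = i^{|x⊙z|} (X^{x₁}Z^{z₁}) ⊗ ⋯ ⊗ (X^{x_n}Z^{z_n})`. -/
def pauliSigma {n : ℕ} (b : (Fin n → ZMod 2) × (Fin n → ZMod 2)) :
    Matrix (Fin n → Fin 2) (Fin n → Fin 2) ℂ :=
  Complex.I ^ hamWt (fun q => b.1 q * b.2 q) • tensorFun fun q => XZ (b.1 q) (b.2 q)

/-- `P_n`: the set of `n`-fold Kronecker products of matrices from `{I₂, X, Y, Z}`. -/
def PauliSet (n : ℕ) : Set (Matrix (Fin n → Fin 2) (Fin n → Fin 2) ℂ) :=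
  { M | ∃ f : Fin n → Matrix (Fin 2) (Fin 2) ℂ,
      (∀ q, f q = 1 ∨ f q = PX ∨ f q = PY ∨ f q = PZ) ∧ M = tensorFun f }

/-- `Z_q = I₂^{⊗(q−1)} ⊗ Z ⊗ I₂^{⊗(N−q)}`, realised on the index type
`Fin N → Fin 2`. -/
def Zq (N : ℕ) (q : Fin N) : Matrix (Fin N → Fin 2) (Fin N → Fin 2) ℂ :=
  tensorFun fun p => if p = q then PZ else 1

/-- A Boolean encoding of a sign in `{1, −1}`. -/
def sgn (b : Bool) : ℂ := if b then 1 else -1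

/-- The measurement projector `E_μ = ∏_{q∈Q} (I + μ(q) Z_q)/2` for a
measurement-outcome assignment `μ : Q → {1,−1}` (encoded by a Boolean
function on `Q`).  Since the factors commute, the product is taken in the
canonical order provided by `Finset.toList`. -/
noncomputable def Eproj (N : ℕ) (Q : Finset (Fin N)) (μ : {q // q ∈ Q} → Bool) :
    Matrix (Fin N → Fin 2) (Fin N → Fin 2) ℂ :=
  (Q.attach.toList.map fun q => (2⁻¹ : ℂ) • (1 + sgn (μ q) • Zq N q.1)).prod

/-- The product `∏_{q∈K} Z_q` of the commuting matrices `Z_q`, `q ∈ K`, taken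
in the canonical order provided by `Finset.toList`. -/
noncomputable def ZProd (N : ℕ) (K : Finset (Fin N)) :
    Matrix (Fin N → Fin 2) (Fin N → Fin 2) ℂ :=
  (K.toList.map (Zq N)).prod

/-- The eigenvalue `±1` of `Z` on the basis vector indexed by `b`. -/
def zEig (b : Fin 2) : ℂ := if b = 0 then 1 else -1

lemma Zq_eq_diagonal (N : ℕ) (q : Fin N) :
    Zq N q = diagonal fun i => zEig (i q) := by
  have hZ : PZ = diagonal zEig := by
    ext a b
    fin_cases a <;> fin_cases b <;> simp [PZ, zEig]
  ext i j
  simp only [Zq, tensorFun, Matrix.of_apply]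
  by_cases hij : i = j
  · subst hij
    rw [diagonal_apply_eq, Finset.prod_eq_single q]
    · simp [hZ]
    · intro p _ hp
      simp [hp]
    · simp
  · rw [diagonal_apply_ne _ hij]
    obtain ⟨p, hp⟩ := Function.ne_iff.mp hij
    refine Finset.prod_eq_zero (Finset.mem_univ p) ?_
    split_ifs <;> simp [hZ, hp]

lemma list_prod_diagonal {ι n : Type*} [Fintype n] [DecidableEq n] (s : Finset ι)
    (f : ι → n → ℂ) :
    (s.toList.map fun q => diagonal (f q)).prod = diagonal fun i => ∏ q ∈ s, f q i := by
  have h := map_list_prod (diagonalRingHom n ℂ) (s.toList.map f)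
  rw [List.map_map, Finset.prod_map_toList] at h
  have h2 : (fun i => ∏ q ∈ s, f q i) = ∏ q ∈ s, f q := by
    ext i
    simp
  rw [h2]
  exact h.symm

lemma ZProd_eq_diagonal (N : ℕ) (K : Finset (Fin N)) :
    ZProd N K = diagonal fun i => ∏ q ∈ K, zEig (i q) := by
  rw [ZProd, ← list_prod_diagonal K fun q (i : Fin N → Fin 2) => zEig (i q)]
  congr 2
  ext1 q
  exact Zq_eq_diagonal N q

lemma Eproj_eq_diagonal (N : ℕ) (Q : Finset (Fin N)) (μ : {q // q ∈ Q} → Bool) :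
    Eproj N Q μ =
      diagonal fun i => ∏ q ∈ Q.attach, (2⁻¹ : ℂ) * (1 + sgn (μ q) * zEig (i q)) := by
  rw [Eproj, ← list_prod_diagonal Q.attach fun q (i : Fin N → Fin 2) =>
    (2⁻¹ : ℂ) * (1 + sgn (μ q) * zEig (i q))]
  congr 2
  ext1 q
  rw [Zq_eq_diagonal, ← diagonal_one, ← diagonal_smul, diagonal_add, ← diagonal_smul]
  rfl

lemma Eproj_mul_self (N : ℕ) (Q : Finset (Fin N)) (μ : {q // q ∈ Q} → Bool) :
    Eproj N Q μ * Eproj N Q μ = Eproj N Q μ := by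
  rw [Eproj_eq_diagonal, diagonal_mul_diagonal]
  congr 1
  ext i
  rw [← Finset.prod_mul_distrib]
  refine Finset.prod_congr rfl fun q _ => ?_
  unfold sgn zEig
  split_ifs <;> norm_num

lemma commute_Eproj (N : ℕ) (Q : Finset (Fin N)) (μ : {q // q ∈ Q} → Bool)
    (S : Matrix (Fin N → Fin 2) (Fin N → Fin 2) ℂ)
    (hS : ∀ q ∈ Q, S * Zq N q = Zq N q * S) : Commute S (Eproj N Q μ) := by
  refine Commute.list_prod_right _ _ fun A hA => ?_
  obtain ⟨q, _, rfl⟩ := List.mem_map.mp hA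
  have hq : Commute S (Zq N q.1) := hS q.1 q.2
  exact ((Commute.one_right S).add_right (hq.smul_right _)).smul_right _

/-- The spectral decomposition `∏_{q∈K} Z_q = Σ_μ (∏_{q∈K} μ(q)) E_μ` for `K ⊆ Q`. On each basis
vector the sum over `μ` factorises over the sites of `Q`; a site contributes the eigenvalue of
`Z_q` when `q ∈ K` and `1` otherwise. -/
lemma sum_sgn_Eproj (N : ℕ) (Q K : Finset (Fin N)) (hK : K ⊆ Q) :
    ∑ μ : {q // q ∈ Q} → Bool,
      (∏ q ∈ Q.attach, if (q : Fin N) ∈ K then sgn (μ q) else 1) • Eproj N Q μ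
      = ZProd N K := by
  have hsite (i : Fin N → Fin 2) (q : {q // q ∈ Q}) :
      ∑ b : Bool, (if (q : Fin N) ∈ K then sgn b else 1) *
        ((2⁻¹ : ℂ) * (1 + sgn b * zEig (i q))) = if (q : Fin N) ∈ K then zEig (i q) else 1 := by
    simp only [Fintype.sum_bool]
    unfold sgn zEig
    split_ifs <;> norm_num at *
  have hdiag (i : Fin N → Fin 2) :
      ∑ μ : {q // q ∈ Q} → Bool,
        (∏ q ∈ Q.attach, if (q : Fin N) ∈ K then sgn (μ q) else 1) *
          ∏ q ∈ Q.attach, (2⁻¹ : ℂ) * (1 + sgn (μ q) * zEig (i q)) = ∏ q ∈ K, zEig (i q) := by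
    simp_rw [← Finset.prod_mul_distrib, ← Finset.univ_eq_attach]
    rw [← Fintype.prod_sum fun (q : {q // q ∈ Q}) b => (if (q : Fin N) ∈ K then sgn b else 1) *
        ((2⁻¹ : ℂ) * (1 + sgn b * zEig (i q)))]
    simp_rw [hsite i]
    rw [Finset.univ_eq_attach, Finset.prod_attach Q fun q => if q ∈ K then zEig (i q) else 1,
      Finset.prod_ite_mem, Finset.inter_eq_right.mpr hK]
  simp_rw [Eproj_eq_diagonal, ZProd_eq_diagonal]
  ext i j
  by_cases hij : i = j
  · subst hij
    simpa [Matrix.sum_apply] using hdiag i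
  · simp [Matrix.sum_apply, hij]

lemma ZProd_mul_of_fixed (N : ℕ) (Q K : Finset (Fin N)) (hK : K ⊆ Q)
    (ρ : Matrix (Fin N → Fin 2) (Fin N → Fin 2) ℂ)
    (hρ : ∀ q ∈ Q, Zq N q * ρ = ρ) : ZProd N K * ρ = ρ := by
  have aux (l : List (Fin N)) (hl : ∀ q ∈ l, q ∈ Q) : (l.map (Zq N)).prod * ρ = ρ := by
    induction l with
    | nil => simp
    | cons a l ih =>
      rw [List.map_cons, List.prod_cons, Matrix.mul_assoc,
        ih fun q hq => hl q (List.mem_cons_of_mem _ hq), hρ a (hl a List.mem_cons_self)]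
  exact aux _ fun q hq => hK (Finset.mem_toList.mp hq)

/-- error-free codeword equation for circuits in extended form:
`Tr(S_in ρ₀) = ν · Σ_μ (∏_{q∈K_M} μ(q)) · Tr(S_out E_μ U ρ₀ U† E_μ)`. -/
theorem errorfree_codeword_equation (N : ℕ) (hN : 1 ≤ N)
    (QI QM KI KM : Finset (Fin N)) (hKI : KI ⊆ QI) (hKM : KM ⊆ QM)
    (U : Matrix (Fin N → Fin 2) (Fin N → Fin 2) ℂ)
    (hU : U ∈ Matrix.unitaryGroup (Fin N → Fin 2) ℂ)
    (Sin Sout : Matrix (Fin N → Fin 2) (Fin N → Fin 2) ℂ)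
    (hSin : Sin ∈ PauliSet N) (hSout : Sout ∈ PauliSet N)
    (ν : ℂ) (hν : ν = 1 ∨ ν = -1)
    (hconj : U * (Sin * ZProd N KI) * Uᴴ = ν • (Sout * ZProd N KM))
    (hcomm : ∀ q ∈ QM, Sout * Zq N q = Zq N q * Sout)
    (ρ₀ : Matrix (Fin N → Fin 2) (Fin N → Fin 2) ℂ)
    (hρ₀ : ∀ q ∈ QI, Zq N q * ρ₀ = ρ₀) :
    (Sin * ρ₀).trace
      = ν * ∑ μ : {q // q ∈ QM} → Bool,
          (∏ q ∈ QM.attach, if (q : Fin N) ∈ KM then sgn (μ q) else 1) *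
            (Sout * Eproj N QM μ * (U * ρ₀ * Uᴴ) * Eproj N QM μ).trace := by
  have hUU : Uᴴ * U = 1 := Matrix.mem_unitaryGroup_iff'.mp hU
  have hE (μ : {q // q ∈ QM} → Bool) :
      (Sout * Eproj N QM μ * (U * ρ₀ * Uᴴ) * Eproj N QM μ).trace
        = (Sout * Eproj N QM μ * (U * ρ₀ * Uᴴ)).trace := by
    rw [Matrix.trace_mul_comm, ← Matrix.mul_assoc (Eproj N QM μ),
      ← Matrix.mul_assoc (Eproj N QM μ) Sout, ← (commute_Eproj N QM μ Sout hcomm).eq, Matrix.mul_assoc Sout, Eproj_mul_self]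
  have hsum : ∑ μ : {q // q ∈ QM} → Bool,
      (∏ q ∈ QM.attach, if (q : Fin N) ∈ KM then sgn (μ q) else 1) *
        (Sout * Eproj N QM μ * (U * ρ₀ * Uᴴ) * Eproj N QM μ).trace
      = (Sout * ZProd N KM * (U * ρ₀ * Uᴴ)).trace := by
    rw [← sum_sgn_Eproj N QM KM hKM, Matrix.mul_sum, Matrix.sum_mul, Matrix.trace_sum]
    refine Finset.sum_congr rfl fun μ _ => ?_
    rw [hE, Matrix.mul_smul, Matrix.smul_mul, Matrix.trace_smul, smul_eq_mul]
  rw [hsum, ← smul_eq_mul (a := ν), ← Matrix.trace_smul, ← Matrix.smul_mul, ← hconj]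
  have hcancel : U * (Sin * ZProd N KI) * Uᴴ * (U * ρ₀ * Uᴴ)
      = U * (Sin * (ZProd N KI * ρ₀) * Uᴴ) := by
    calc U * (Sin * ZProd N KI) * Uᴴ * (U * ρ₀ * Uᴴ)
        = U * (Sin * ZProd N KI) * (Uᴴ * U) * ρ₀ * Uᴴ := by simp only [Matrix.mul_assoc]
      _ = U * (Sin * (ZProd N KI * ρ₀) * Uᴴ) := by
        rw [hUU, Matrix.mul_one]
        simp only [Matrix.mul_assoc]
  rw [hcancel, ZProd_mul_of_fixed N QI KI hKI ρ₀ hρ₀, Matrix.trace_mul_comm U,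
    Matrix.mul_assoc (Sin * ρ₀), hUU, Matrix.mul_one]

end
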